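/- The Schur multiplier H₂(A₅, ℤ) of the alternating group A₅ is isomorphic to ℤ/2ℤ. -/

import Mathlib

/-!
A class in `H²(G, M)` is a central extension of `G` by `M`. If `M` is divisible and the extension
becomes commutative over a subgroup `H` of finite index, then `M` is a direct factor of the
preimage of `H`, and composing the transfer with a retraction onto `M` shows that the index of `H`
kills the class. For `G = A₅`, the cyclic subgroups of orders 2, 3 and 5 give `2 • H²(A₅, M) = 0`,
and a Klein four-group, of odd index 15, shows that a class vanishes as soon as lifts of two
generators of this four-group commute. So taking the commutator of these lifts embeds `H²(A₅, M)`
in the 2-torsion of `M`. Every nonzero 2-torsion element is attained: it is the image of `-1`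
under a character of the kernel `{±1}` of the double cover `SL(2, 5) → A₅`, and pushing the cover
forward along this character does not split it, because `-1` is a commutator in `SL(2, 5)`. The
cover itself is the action of `SL(2, 5)` on the five cosets of its binary tetrahedral subgroup.
-/

open groupCohomology Subgroup

section CentralExtensions

universe u

variable {k G M : Type u} [CommRing k] [Group G] [AddCommGroup M] [Module k M]

/-- The `M`-valued function of two variables underlying a 2-cocycle with coefficients in the
trivial representation `M`. -/
def factorSet (c : cocycles₂ (Rep.trivial k G M)) (g h : G) : M := c (g, h)

theorem factorSet_mul_left_add (c : cocycles₂ (Rep.trivial k G M)) (g h j : G) :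
    factorSet c (g * h) j + factorSet c g h = factorSet c h j + factorSet c g (h * j) :=
  (mem_cocycles₂_iff c).1 c.2 g h j

theorem factorSet_one_left (c : cocycles₂ (Rep.trivial k G M)) (g : G) :
    factorSet c 1 g = factorSet c 1 1 :=
  cocycles₂_map_one_fst c g

theorem factorSet_one_right (c : cocycles₂ (Rep.trivial k G M)) (g : G) :
    factorSet c g 1 = factorSet c 1 1 :=
  cocycles₂_map_one_snd c g

theorem factorSet_nsmul (n : ℕ) (c : cocycles₂ (Rep.trivial k G M)) (g h : G) :
    factorSet (n • c) g h = n • factorSet c g h := rfl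

theorem H2π_trivial_eq_zero_iff (c : cocycles₂ (Rep.trivial k G M)) :
    H2π (Rep.trivial k G M) c = 0 ↔
      ∃ t : G → M, ∀ g h, factorSet c g h + t (g * h) = t g + t h := by
  rw [H2π_eq_zero_iff]
  refine exists_congr fun t => funext_iff.trans (Prod.forall.trans (forall₂_congr fun g h => ?_))
  change t h - t (g * h) + t g = factorSet c g h ↔ _
  rw [sub_add_eq_add_sub, sub_eq_iff_eq_add, eq_comm, add_comm (t h)]

/-- The central extension of `G` by `M` with factor set `c`: the set `G × M` with the product
`(g, a) (h, b) = (g h, a + b + c (g, h))`. As `c` need not be normalized, the identity is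
`(1, -c (1, 1))`. -/
@[ext]
structure CocycleExtension (c : cocycles₂ (Rep.trivial k G M)) where
  base : G
  fiber : M

namespace CocycleExtension

variable (c : cocycles₂ (Rep.trivial k G M))

instance : Mul (CocycleExtension c) :=
  ⟨fun x y => ⟨x.base * y.base, x.fiber + y.fiber + factorSet c x.base y.base⟩⟩

instance : One (CocycleExtension c) := ⟨⟨1, -factorSet c 1 1⟩⟩

instance : Inv (CocycleExtension c) :=
  ⟨fun x => ⟨x.base⁻¹, -x.fiber - factorSet c x.base⁻¹ x.base - factorSet c 1 1⟩⟩

variable {c}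

theorem mul_def (x y : CocycleExtension c) :
    x * y = ⟨x.base * y.base, x.fiber + y.fiber + factorSet c x.base y.base⟩ := rfl

theorem one_def : (1 : CocycleExtension c) = ⟨1, -factorSet c 1 1⟩ := rfl

theorem inv_def (x : CocycleExtension c) :
    x⁻¹ = ⟨x.base⁻¹, -x.fiber - factorSet c x.base⁻¹ x.base - factorSet c 1 1⟩ := rfl

instance : Group (CocycleExtension c) := Group.ofLeftAxioms
  (fun x y z => by
    ext
    · simp only [mul_def, mul_assoc]
    · have h := factorSet_mul_left_add c x.base y.base z.base
      simp only [mul_def]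
      linear_combination (norm := module) h)
  (fun x => by ext <;> simp [mul_def, one_def, factorSet_one_left c x.base])
  (fun x => by
    ext
    · simp only [mul_def, one_def, inv_def, inv_mul_cancel]
    · simp only [mul_def, one_def, inv_def]
      abel)

variable (c) in
/-- The projection of the extension onto `G`. -/
def proj : CocycleExtension c →* G where
  toFun := base
  map_one' := rfl
  map_mul' _ _ := rfl

variable (c) in
/-- The inclusion of `M` as the kernel of `proj`. -/
def inl : Multiplicative M →* CocycleExtension c where
  toFun a := ⟨1, a.toAdd - factorSet c 1 1⟩
  map_one' := by simp [one_def]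
  map_mul' a b := by
    ext
    · simp [mul_def]
    · simp only [mul_def, toAdd_mul]
      abel

variable (c) in
/-- The set-theoretic section of `proj` whose factor set is `c`. -/
def lift (g : G) : CocycleExtension c := ⟨g, 0⟩

theorem proj_lift (g : G) : proj c (lift c g) = g := rfl

theorem proj_surjective : Function.Surjective (proj c) := fun g => ⟨lift c g, proj_lift g⟩

theorem inl_injective : Function.Injective (inl c) := fun a b h => by
  simpa [inl] using h

theorem ker_proj : (proj c).ker = (inl c).range := by
  ext x
  constructor
  · intro hx
    refine ⟨.ofAdd (x.fiber + factorSet c 1 1), ?_⟩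
    ext
    · exact hx.symm
    · simp [inl]
  · rintro ⟨a, rfl⟩
    rfl

theorem inl_mem_center (a : Multiplicative M) : inl c a ∈ center (CocycleExtension c) := by
  refine mem_center_iff.2 fun x => ?_
  ext
  · simp [mul_def, inl]
  · simp only [mul_def, inl, MonoidHom.coe_mk, OneHom.coe_mk, factorSet_one_left c x.base,
      factorSet_one_right c x.base]
    abel

theorem lift_mul_lift (g h : G) :
    lift c g * lift c h = inl c (.ofAdd (factorSet c g h)) * lift c (g * h) := by
  ext
  · simp [mul_def, inl, lift]
  · simp [mul_def, inl, lift, factorSet_one_left c (g * h)]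

theorem lift_mul_lift_comm {g h : G} (hgh : g * h = h * g)
    (hc : factorSet c g h = factorSet c h g) :
    lift c g * lift c h = lift c h * lift c g := by
  rw [lift_mul_lift, lift_mul_lift, hgh, hc]

theorem nsmul_H2π_eq_zero (n : ℕ) (ψ : CocycleExtension c →* Multiplicative M)
    (hψ : ∀ a, ψ (inl c a) = a ^ n) : n • H2π (Rep.trivial k G M) c = 0 := by
  rw [← map_nsmul, H2π_trivial_eq_zero_iff]
  refine ⟨fun g => (ψ (lift c g)).toAdd, fun g h => ?_⟩
  have h := congrArg (fun e => (ψ e).toAdd) (lift_mul_lift (c := c) g h)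
  simpa only [map_mul, hψ, toAdd_mul, toAdd_pow, toAdd_ofAdd, factorSet_nsmul] using h.symm

end CocycleExtension

section Transfer

theorem transfer_apply_of_mem_center {E A : Type*} [Group E] [CommGroup A] {H : Subgroup E}
    [H.FiniteIndex] (φ : H →* A) {z : E} (hz : z ∈ center E) (hzH : z ∈ H) :
    φ.transfer z = φ ⟨z, hzH⟩ ^ H.index := by
  rw [φ.transfer_eq_pow z fun k g _ => ?_, ← map_pow]
  · rfl
  · rw [(mem_center_iff.1 (pow_mem hz k) g⁻¹), inv_mul_cancel_right]

theorem exists_monoidHom_comp_eq_id {A B : Type*} [AddCommGroup A] [CommGroup B]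
    (hA : Module.Baer ℤ A) (i : Multiplicative A →* B) (hi : Function.Injective i) :
    ∃ r : B →* Multiplicative A, r.comp i = MonoidHom.id _ := by
  obtain ⟨r, hr⟩ := hA.extension_property_addMonoidHom (MonoidHom.toAdditiveRight i) hi
    (AddMonoidHom.id A)
  exact ⟨AddMonoidHom.toMultiplicativeRight r, MonoidHom.ext fun a =>
    congrArg (fun f : A →+ A => Multiplicative.ofAdd (f a.toAdd)) hr⟩

end Transfer

namespace CocycleExtension

variable {c : cocycles₂ (Rep.trivial k G M)}

open scoped IsMulCommutative in
theorem index_nsmul_H2π_eq_zero (hM : Module.Baer ℤ M) (H : Subgroup (CocycleExtension c))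
    [H.FiniteIndex] [IsMulCommutative H] (hH : (inl c).range ≤ H) :
    H.index • H2π (Rep.trivial k G M) c = 0 := by
  have hmem (a) : inl c a ∈ H := hH ⟨a, rfl⟩
  obtain ⟨r, hr⟩ := exists_monoidHom_comp_eq_id hM ((inl c).codRestrict H hmem)
    fun a b h => inl_injective (congrArg Subtype.val h)
  refine nsmul_H2π_eq_zero H.index r.transfer fun a => ?_
  rw [transfer_apply_of_mem_center r (inl_mem_center a) (hmem a)]
  exact congrArg (· ^ H.index) (DFunLike.congr_fun hr a)

end CocycleExtension

open CocycleExtension in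
theorem index_closure_nsmul_H2π_eq_zero (hM : Module.Baer ℤ M)
    (c : cocycles₂ (Rep.trivial k G M)) (S : Set G) [(closure S).FiniteIndex]
    (hS : ∀ x ∈ S, ∀ y ∈ S, x * y = y * x)
    (hc : ∀ x ∈ S, ∀ y ∈ S, factorSet c x y = factorSet c y x) :
    (closure S).index • H2π (Rep.trivial k G M) c = 0 := by
  let H := closure (Set.range (inl c) ∪ lift c '' S)
  have hinl : (inl c).range ≤ H := fun _ hx => subset_closure (Or.inl hx)
  have hproj : H.map (proj c) = closure S := by
    rw [MonoidHom.map_closure, Set.image_union, ← Set.range_comp, Set.image_image,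
      Subgroup.closure_union]
    have : Set.range (proj c ∘ inl c) = {1} := Set.range_const
    simp [this, proj_lift]
  have hcomm : IsMulCommutative H := isMulCommutative_closure <| by
    rintro _ (⟨a, rfl⟩ | ⟨x, hx, rfl⟩) y hy
    · exact (mem_center_iff.1 (inl_mem_center a) y).symm
    · obtain ⟨a, rfl⟩ | ⟨z, hz, rfl⟩ := hy
      · exact mem_center_iff.1 (inl_mem_center a) _
      · exact lift_mul_lift_comm (hS x hx z hz) (hc x hx z hz)
  have hindex : (closure S).index = H.index := by
    rw [← hproj, index_map_eq H proj_surjective (ker_proj.trans_le hinl)]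
  have : H.FiniteIndex := ⟨hindex ▸ FiniteIndex.index_ne_zero⟩
  exact hindex ▸ index_nsmul_H2π_eq_zero hM H hinl

theorem index_zpowers_nsmul_H2_eq_zero (hM : Module.Baer ℤ M) (g : G) [(zpowers g).FiniteIndex]
    (z : H2 (Rep.trivial k G M)) : (zpowers g).index • z = 0 := by
  induction z using H2_induction_on with | _ c
  rw [zpowers_eq_closure] at *
  exact index_closure_nsmul_H2π_eq_zero hM c {g} (by simp) (by simp)


section Pushforward

variable {E : Type*} [Group E] {π : E →* G} {s : G → E} (hs : Function.RightInverse s π)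

/-- The kernel component of `e : E` in the decomposition `e = kerPart hs e * s (π e)` given by a
set-theoretic section `s` of `π`. -/
def kerPart (e : E) : π.ker :=
  ⟨e * (s (π e))⁻¹, by rw [MonoidHom.mem_ker, map_mul, map_inv, hs, mul_inv_cancel]⟩

theorem kerPart_section (g : G) : kerPart hs (s g) = 1 :=
  Subtype.ext <| by simp only [kerPart, hs g, mul_inv_cancel, coe_one]

theorem kerPart_ker_mul (z : π.ker) (e : E) : kerPart hs (z * e) = z * kerPart hs e :=
  Subtype.ext <| by
    simp only [kerPart, map_mul, MonoidHom.mem_ker.1 z.2, one_mul, mul_assoc, coe_mul]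

theorem kerPart_mul (hker : π.ker ≤ center E) (e f : E) :
    kerPart hs (e * f) = kerPart hs e * kerPart hs f * kerPart hs (s (π e) * s (π f)) := by
  have hcomm : s (π e) * (f * (s (π f))⁻¹) = f * (s (π f))⁻¹ * s (π e) :=
    mem_center_iff.1 (hker (kerPart hs f).2) (s (π e))
  ext
  simp only [kerPart, coe_mul, map_mul, hs (π e), hs (π f)]
  calc e * f * (s (π e * π f))⁻¹
      = e * (s (π e))⁻¹ * (s (π e) * (f * (s (π f))⁻¹)) * s (π f) * (s (π e * π f))⁻¹ := by group
    _ = _ := by rw [hcomm]; group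

theorem map_kerPart_section_mul_cocycle (hker : π.ker ≤ center E) (χ : π.ker →* Multiplicative M)
    (g h j : G) :
    χ (kerPart hs (s (g * h) * s j)) * χ (kerPart hs (s g * s h)) =
      χ (kerPart hs (s h * s j)) * χ (kerPart hs (s g * s (h * j))) := by
  have hleft := kerPart_mul hs hker (s g * s h) (s j)
  have hright := kerPart_mul hs hker (s g) (s h * s j)
  simp only [map_mul, hs g, hs h, hs j, kerPart_section, mul_one, one_mul] at hleft hright
  rw [mul_comm, ← map_mul, ← map_mul, ← hleft, ← hright, mul_assoc]

/-- The factor set `(g, h) ↦ χ (s g * s h * (s (g * h))⁻¹)` obtained by pushing a central extension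
`π : E →* G` with section `s` forward along a character `χ` of its kernel. -/
def pushforwardCocycle (hker : π.ker ≤ center E) (χ : π.ker →* Multiplicative M) :
    cocycles₂ (Rep.trivial k G M) :=
  ⟨fun p => (χ (kerPart hs (s p.1 * s p.2))).toAdd, (mem_cocycles₂_iff _).2 fun g h j =>
    congrArg Multiplicative.toAdd (map_kerPart_section_mul_cocycle hs hker χ g h j)⟩

theorem exists_extension_of_H2π_pushforwardCocycle_eq_zero (hker : π.ker ≤ center E)
    (χ : π.ker →* Multiplicative M)
    (h0 : H2π (Rep.trivial k G M) (pushforwardCocycle hs hker χ) = 0) :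
    ∃ ψ : E →* Multiplicative M, ∀ z : π.ker, ψ z = χ z := by
  obtain ⟨t, ht⟩ := (H2π_trivial_eq_zero_iff _).1 h0
  have ht' (g h : G) : χ (kerPart hs (s g * s h)) * .ofAdd (t (g * h)) =
      .ofAdd (t g) * .ofAdd (t h) := congrArg Multiplicative.ofAdd (ht g h)
  let ψ : E →* Multiplicative M := .mk' (fun e => χ (kerPart hs e) * .ofAdd (t (π e))) fun e f => by
    rw [kerPart_mul hs hker, map_mul, map_mul, map_mul, mul_assoc, ht', mul_mul_mul_comm]
  refine ⟨ψ, fun z => ?_⟩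
  calc ψ z = ψ (z * 1) := by rw [mul_one]
    _ = χ z * ψ 1 := by
      simp only [ψ, MonoidHom.mk'_apply, kerPart_ker_mul hs z 1, map_mul χ, map_mul π,
        MonoidHom.mem_ker.1 z.2, one_mul, mul_assoc]
    _ = χ z := by rw [map_one, mul_one]

theorem H2π_pushforwardCocycle_ne_zero (hker : π.ker ≤ center E) (χ : π.ker →* Multiplicative M)
    {z : π.ker} (hz : (z : E) ∈ commutator E) (hχ : χ z ≠ 1) :
    H2π (Rep.trivial k G M) (pushforwardCocycle hs hker χ) ≠ 0 := fun h0 => hχ <| by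
  obtain ⟨ψ, hψ⟩ := exists_extension_of_H2π_pushforwardCocycle_eq_zero hs hker χ h0
  rw [← hψ]
  exact Abelianization.commutator_subset_ker ψ hz

end Pushforward

/-- The map `c ↦ c (x, y) - c (y, x)`, which for commuting `x` and `y` is the commutator of lifts
of `x` and `y` to the extension with factor set `c`. -/
def commutatorPairing (x y : G) : cocycles₂ (Rep.trivial k G M) →ₗ[k] M where
  toFun c := factorSet c x y - factorSet c y x
  map_add' c d := add_sub_add_comm (factorSet c x y) (factorSet d x y) _ _
  map_smul' r c := (smul_sub r (factorSet c x y) (factorSet c y x)).symm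

theorem commutatorPairing_apply (x y : G) (c : cocycles₂ (Rep.trivial k G M)) :
    commutatorPairing x y c = factorSet c x y - factorSet c y x := rfl

theorem commutatorPairing_eq_zero_of_H2π_eq_zero {x y : G} (hxy : x * y = y * x)
    {c : cocycles₂ (Rep.trivial k G M)} (hc : H2π (Rep.trivial k G M) c = 0) :
    commutatorPairing x y c = 0 := by
  obtain ⟨t, ht⟩ := (H2π_trivial_eq_zero_iff c).1 hc
  refine sub_eq_zero.2 (add_right_cancel (b := t (x * y)) ?_)
  rw [ht x y, hxy, ht y x, add_comm]

theorem index_closure_pair_nsmul_H2π_eq_zero (hM : Module.Baer ℤ M)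
    {x y : G} [(closure {x, y}).FiniteIndex] (hxy : x * y = y * x)
    {c : cocycles₂ (Rep.trivial k G M)} (hc : commutatorPairing x y c = 0) :
    (closure {x, y}).index • H2π (Rep.trivial k G M) c = 0 := by
  have hc' : factorSet c x y = factorSet c y x := sub_eq_zero.1 hc
  refine index_closure_nsmul_H2π_eq_zero hM c {x, y} ?_ ?_ <;>
    simp [hxy, hc']

theorem card_div_prime_nsmul_H2_eq_zero [Finite G] (hM : Module.Baer ℤ M) (p : ℕ) [Fact p.Prime]
    (hp : p ∣ Nat.card G) (z : H2 (Rep.trivial k G M)) : (Nat.card G / p) • z = 0 := by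
  obtain ⟨g, hg⟩ := exists_prime_orderOf_dvd_card' p hp
  have hindex : (zpowers g).index = Nat.card G / p := by
    rw [← hg, ← Nat.card_zpowers, ← (zpowers g).index_mul_card, Nat.mul_div_cancel _ Nat.card_pos]
  exact hindex ▸ index_zpowers_nsmul_H2_eq_zero hM g z

end CentralExtensions

theorem exists_monoidHom_of_orderOf_eq_two {H A : Type*} [Group H] [Group A] {ζ : H}
    (horder : orderOf ζ = 2) (hζ : ∀ z, z = 1 ∨ z = ζ) {a : A} (ha : a ^ 2 = 1) :
    ∃ χ : H →* A, χ ζ = a ∧ ∀ z, χ z = 1 ∨ χ z = a := by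
  have hgen (z : H) : z ∈ zpowers ζ := by
    obtain rfl | rfl := hζ z
    exacts [one_mem _, mem_zpowers z]
  have hdvd : orderOf a ∣ orderOf ζ := by
    rw [horder]
    exact orderOf_dvd_of_pow_eq_one ha
  have hχ := monoidHomOfForallMemZpowers_apply_gen hgen hdvd
  refine ⟨monoidHomOfForallMemZpowers hgen hdvd, hχ, fun z => ?_⟩
  obtain rfl | rfl := hζ z
  exacts [.inl (map_one _), .inr hχ]

theorem exists_surjective_monoidHom_alternatingGroup {E : Type*} [Group E] (T : Subgroup E) {n : ℕ}
    (hT : T.index = n) (hcore : T.normalCore.index * 2 = n.factorial) :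
    ∃ π : E →* alternatingGroup (Fin n), Function.Surjective π ∧ π.ker = T.normalCore := by
  classical
  have hcore_ne : T.normalCore.index ≠ 0 := fun h => n.factorial_ne_zero (by rw [← hcore, h])
  have : T.normalCore.FiniteIndex := ⟨hcore_ne⟩
  have : T.FiniteIndex := finiteIndex_of_le T.normalCore_le
  have := Fintype.ofFinite (E ⧸ T)
  let f := MulAction.toPermHom E (E ⧸ T)
  have hf : f.ker = T.normalCore := T.normalCore_eq_ker.symm
  have hindex : f.range.index = 2 := by
    have hcard := f.range.card_mul_index
    rw [← index_ker, hf, Nat.card_perm, ← index, hT, ← hcore] at hcard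
    exact Nat.eq_of_mul_eq_mul_left (Nat.pos_of_ne_zero hcore_ne) hcard
  have hrange := Equiv.Perm.eq_alternatingGroup_of_index_eq_two hindex
  let e : f.range ≃* alternatingGroup (Fin n) := (MulEquiv.subgroupCongr hrange).trans
    (Equiv.altCongrHom (Finite.equivFinOfCardEq hT))
  refine ⟨e.toMonoidHom.comp f.rangeRestrict, e.surjective.comp f.rangeRestrict_surjective, ?_⟩
  rw [MulEquiv.toMonoidHom_eq_coe, MonoidHom.ker_mulEquiv_comp, MonoidHom.ker_rangeRestrict, hf]

/-- The binary icosahedral group, the double cover `SL(2, 5)` of `A₅`. -/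
abbrev BinaryIcosahedral := Matrix.SpecialLinearGroup (Fin 2) (ZMod 5)

namespace BinaryIcosahedral

/-- The binary tetrahedral subgroup, of index `5`: the normalizer of the quaternion group formed by
the eight monomial matrices. Its other sixteen elements are the `g` with `g 0 0 * g 1 1 = 3`. -/
def binaryTetrahedral : Subgroup BinaryIcosahedral where
  carrier := {g | g 0 1 = 0 ∧ g 1 0 = 0 ∨ g 0 0 = 0 ∧ g 1 1 = 0 ∨ g 0 0 * g 1 1 = 3}
  one_mem' := by decide
  mul_mem' := by
    simp only [Set.mem_ofPred_eq]
    decide +revert +kernel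
  inv_mem' := by
    simp only [Set.mem_ofPred_eq]
    decide +revert +kernel

instance : DecidablePred (· ∈ binaryTetrahedral) := fun g =>
  inferInstanceAs (Decidable (_ ∧ _ ∨ _ ∧ _ ∨ g 0 0 * g 1 1 = 3))

theorem card_eq : Nat.card BinaryIcosahedral = 120 := by
  rw [Nat.card_eq_fintype_card]
  decide +kernel

theorem index_binaryTetrahedral : binaryTetrahedral.index = 5 := by
  have hT : Nat.card binaryTetrahedral = 24 := by
    rw [Nat.card_eq_fintype_card]
    decide +kernel
  have := binaryTetrahedral.card_mul_index
  rw [hT, card_eq] at this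
  lia

theorem mem_normalCore_binaryTetrahedral_iff :
    ∀ g, g ∈ binaryTetrahedral.normalCore ↔ g = 1 ∨ g = -1 := by
  change ∀ g, (∀ h, h * g * h⁻¹ ∈ binaryTetrahedral) ↔ g = 1 ∨ g = -1
  decide +kernel

theorem index_normalCore_binaryTetrahedral : binaryTetrahedral.normalCore.index = 60 := by
  have h2 : Nat.card binaryTetrahedral.normalCore = 2 := by
    have : (binaryTetrahedral.normalCore : Set BinaryIcosahedral) = {1, -1} :=
      Set.ext mem_normalCore_binaryTetrahedral_iff
    exact (congrArg Set.ncard this).trans (Set.ncard_pair (by decide))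
  have := binaryTetrahedral.normalCore.card_mul_index
  rw [h2, card_eq] at this
  lia

theorem exists_surjective_monoidHom_alternatingGroup_five :
    ∃ π : BinaryIcosahedral →* alternatingGroup (Fin 5),
      Function.Surjective π ∧ ∀ g, g ∈ π.ker ↔ g = 1 ∨ g = -1 := by
  obtain ⟨π, hπ, hker⟩ := exists_surjective_monoidHom_alternatingGroup binaryTetrahedral
    index_binaryTetrahedral (by rw [index_normalCore_binaryTetrahedral]; rfl)
  exact ⟨π, hπ, fun g => by rw [hker, mem_normalCore_binaryTetrahedral_iff]⟩

open scoped commutatorElement in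
theorem neg_one_mem_commutator : (-1 : BinaryIcosahedral) ∈ commutator BinaryIcosahedral := by
  let i : BinaryIcosahedral := ⟨!![2, 0; 0, 3], by decide⟩
  let j : BinaryIcosahedral := ⟨!![0, 1; -1, 0], by decide⟩
  have hij : -1 = ⁅i, j⁆ := by decide
  rw [hij]
  exact commutator_mem_commutator (mem_top _) (mem_top _)

end BinaryIcosahedral

section AlternatingGroupFive

variable {k M : Type} [CommRing k] [AddCommGroup M] [Module k M]

theorem nat_card_alternatingGroup_five : Nat.card (alternatingGroup (Fin 5)) = 60 := by
  rw [nat_card_alternatingGroup, Nat.card_fin]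
  rfl

theorem two_nsmul_H2_alternatingGroup_five_eq_zero (hM : Module.Baer ℤ M)
    (z : H2 (Rep.trivial k (alternatingGroup (Fin 5)) M)) : 2 • z = 0 := by
  have hdvd (p : ℕ) (hp : p.Prime) (h : p ∣ 60) : addOrderOf z ∣ 60 / p := by
    have : Fact p.Prime := ⟨hp⟩
    rw [← nat_card_alternatingGroup_five] at h ⊢
    exact addOrderOf_dvd_of_nsmul_eq_zero (card_div_prime_nsmul_H2_eq_zero hM p h z)
  exact addOrderOf_dvd_iff_nsmul_eq_zero.1 <| Nat.dvd_gcd (hdvd 2 (by norm_num) (by norm_num)) <|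
    Nat.dvd_gcd (hdvd 3 (by norm_num) (by norm_num)) (hdvd 5 (by norm_num) (by norm_num))

/-- The double transposition `(0 1)(2 3)` in `A₅`. -/
def kleinFst : alternatingGroup (Fin 5) :=
  ⟨.swap 0 1 * .swap 2 3, Equiv.Perm.mem_alternatingGroup.2 (by decide)⟩

/-- The double transposition `(0 2)(1 3)` in `A₅`, generating with `kleinFst` a Klein four-group. -/
def kleinSnd : alternatingGroup (Fin 5) :=
  ⟨.swap 0 2 * .swap 1 3, Equiv.Perm.mem_alternatingGroup.2 (by decide)⟩

theorem kleinFst_mul_kleinSnd : kleinFst * kleinSnd = kleinSnd * kleinFst := by decide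

theorem index_closure_klein_dvd : (closure {kleinFst, kleinSnd}).index ∣ 15 := by
  have hmem : ∀ g, g ∈ centralizer {kleinFst} ↔
      g ∈ ({1, kleinFst, kleinSnd, kleinFst * kleinSnd} : Finset (alternatingGroup (Fin 5))) := by
    simp only [mem_centralizer_singleton_iff]
    decide +kernel
  have hcard : Nat.card (centralizer {kleinFst}) = 4 := by
    rw [Nat.subtype_card _ fun g => (hmem g).symm]
    decide
  have hle : centralizer {kleinFst} ≤ closure {kleinFst, kleinSnd} := fun g hg => by
    have hfst : kleinFst ∈ closure {kleinFst, kleinSnd} := subset_closure (by simp)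
    have hsnd : kleinSnd ∈ closure {kleinFst, kleinSnd} := subset_closure (by simp)
    simp only [hmem, Finset.mem_insert, Finset.mem_singleton] at hg
    rcases hg with rfl | rfl | rfl | rfl
    exacts [one_mem _, hfst, hsnd, mul_mem hfst hsnd]
  have hindex : (centralizer {kleinFst}).index = 15 := by
    have := (centralizer {kleinFst}).card_mul_index
    rw [hcard, nat_card_alternatingGroup_five] at this
    lia
  exact hindex ▸ index_dvd_of_le hle

theorem H2π_alternatingGroup_five_eq_zero_iff (hM : Module.Baer ℤ M)
    (c : cocycles₂ (Rep.trivial k (alternatingGroup (Fin 5)) M)) :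
    H2π (Rep.trivial k (alternatingGroup (Fin 5)) M) c = 0 ↔
      commutatorPairing kleinFst kleinSnd c = 0 := by
  refine ⟨commutatorPairing_eq_zero_of_H2π_eq_zero kleinFst_mul_kleinSnd, fun hc => ?_⟩
  have h15 := addOrderOf_dvd_of_nsmul_eq_zero <|
    index_closure_pair_nsmul_H2π_eq_zero hM kleinFst_mul_kleinSnd hc
  have h2 := addOrderOf_dvd_of_nsmul_eq_zero <| two_nsmul_H2_alternatingGroup_five_eq_zero hM
    (H2π (Rep.trivial k (alternatingGroup (Fin 5)) M) c)
  rw [← AddMonoid.addOrderOf_eq_one_iff]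
  exact Nat.dvd_one.1 (Nat.dvd_gcd (h15.trans index_closure_klein_dvd) h2)

theorem exists_commutatorPairing_klein_eq (hM : Module.Baer ℤ M) {a : M} (ha : (2 : k) • a = 0) :
    ∃ c : cocycles₂ (Rep.trivial k (alternatingGroup (Fin 5)) M),
      commutatorPairing kleinFst kleinSnd c = a := by
  obtain rfl | ha0 := eq_or_ne a 0
  · exact ⟨0, map_zero _⟩
  have ha2 : a + a = 0 := by rwa [← two_smul k]
  obtain ⟨π, hπ, hker⟩ := BinaryIcosahedral.exists_surjective_monoidHom_alternatingGroup_five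
  obtain ⟨s, hs⟩ := hπ.hasRightInverse
  let ζ : π.ker := ⟨-1, (hker _).2 (.inr rfl)⟩
  have hζ : orderOf ζ = 2 := (orderOf_mk _ _).trans (orderOf_eq_prime (by decide) (by decide))
  obtain ⟨χ, hχ, hχ'⟩ := exists_monoidHom_of_orderOf_eq_two hζ
    (fun z => ((hker z).1 z.2).imp Subtype.ext Subtype.ext) (a := Multiplicative.ofAdd a)
    (by rw [sq, ← ofAdd_add, ha2, ofAdd_zero])
  have hcenter : π.ker ≤ center BinaryIcosahedral := fun z hz => mem_center_iff.2 fun g => by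
    obtain rfl | rfl := (hker z).1 hz <;> simp
  let c : cocycles₂ (Rep.trivial k (alternatingGroup (Fin 5)) M) := pushforwardCocycle hs hcenter χ
  have hvalue (g h) : factorSet c g h = 0 ∨ factorSet c g h = a := hχ' _
  have hc0 : commutatorPairing kleinFst kleinSnd c ≠ 0 :=
    (H2π_alternatingGroup_five_eq_zero_iff hM c).not.1 <|
      H2π_pushforwardCocycle_ne_zero hs hcenter χ BinaryIcosahedral.neg_one_mem_commutator
        (hχ.trans_ne ha0)
  refine ⟨c, ?_⟩
  rw [commutatorPairing_apply] at hc0 ⊢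
  obtain h₁ | h₁ := hvalue kleinFst kleinSnd <;> obtain h₂ | h₂ := hvalue kleinSnd kleinFst <;>
    rw [h₁, h₂] at hc0 ⊢
  · exact absurd (sub_zero 0) hc0
  · rwa [zero_sub, neg_eq_iff_add_eq_zero]
  · exact sub_zero a
  · exact absurd (sub_self a) hc0

theorem range_commutatorPairing_klein (hM : Module.Baer ℤ M) :
    (commutatorPairing (k := k) (M := M) kleinFst kleinSnd).range = .torsionBy k M 2 := by
  ext a
  rw [Submodule.mem_torsionBy_iff]
  refine ⟨?_, exists_commutatorPairing_klein_eq hM⟩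
  rintro ⟨c, rfl⟩
  rw [← map_smul]
  refine (H2π_alternatingGroup_five_eq_zero_iff hM _).1 ?_
  rw [map_smul, ofNat_smul_eq_nsmul]
  exact two_nsmul_H2_alternatingGroup_five_eq_zero hM _

theorem schur_multiplier_A5_general [DivisibleBy M ℤ] :
    Nonempty (groupCohomology (Rep.trivial k (alternatingGroup (Fin 5)) M) 2 ≃ₗ[k]
      Submodule.torsionBy k M 2) := by
  have hM := Module.Baer.of_divisible M
  let A := Rep.trivial k (alternatingGroup (Fin 5)) M
  have hker : (H2π A).hom.ker = (commutatorPairing kleinFst kleinSnd).ker :=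
    Submodule.ext (H2π_alternatingGroup_five_eq_zero_iff hM)
  have hsurj : Function.Surjective (H2π A).hom :=
    (ModuleCat.epi_iff_surjective _).1 inferInstance
  exact ⟨((H2π A).hom.quotKerEquivOfSurjective hsurj).symm ≪≫ₗ Submodule.quotEquivOfEq _ _ hker ≪≫ₗ
    LinearMap.quotKerEquivRange _ ≪≫ₗ .ofEq _ _ (range_commutatorPairing_klein hM)⟩

end AlternatingGroupFive

section UnitsOfField

variable (K : Type*) [Field K]

noncomputable instance [IsAlgClosed K] : DivisibleBy (Additive Kˣ) ℤ :=
  have : DivisibleBy (Additive Kˣ) ℕ := divisibleByOfSMulRightSurj _ _ fun {n} hn a => by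
    obtain ⟨z, hz⟩ := IsAlgClosed.exists_pow_nat_eq (a.toMul : K) (Nat.pos_of_ne_zero hn)
    have hz0 : z ≠ 0 := by
      rintro rfl
      exact a.toMul.ne_zero (by rw [← hz, zero_pow hn])
    exact ⟨.ofMul (.mk0 z hz0), Additive.toMul.injective (Units.ext hz)⟩
  AddGroup.divisibleByIntOfDivisibleByNat _

theorem nonempty_torsionBy_two_units_equiv (R : Type*) [CommRing R] [NoZeroDivisors R]
    [NeZero (2 : R)] : Nonempty (Submodule.torsionBy ℤ (Additive Rˣ) 2 ≃ₗ[ℤ] ZMod 2) := by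
  have hmem (a : Additive Rˣ) :
      a ∈ Submodule.torsionBy ℤ (Additive Rˣ) 2 ↔ a = 0 ∨ a = .ofMul (-1) := by
    have hsq : (2 : ℤ) • a = 0 ↔ a.toMul ^ 2 = 1 ^ 2 := by
      rw [one_pow, ← zpow_ofNat]
      rfl
    exact (Submodule.mem_torsionBy_iff _ _).trans (hsq.trans Units.sq_eq_sq_iff_eq_or_eq_neg)
  have hne : (0 : Additive Rˣ) ≠ .ofMul (-1) := fun h => NeZero.ne (2 : R) <| by
    have : (1 : R) = -1 := congrArg (fun a : Additive Rˣ => (a.toMul : R)) h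
    rw [← one_add_one_eq_two]
    exact eq_neg_iff_add_eq_zero.1 this
  have hcard : Nat.card (Submodule.torsionBy ℤ (Additive Rˣ) 2) = 2 :=
    (congrArg Set.ncard (Set.ext hmem)).trans (Set.ncard_pair hne)
  exact ⟨(addEquivOfPrimeCardEq (p := 2) hcard (Nat.card_zmod 2)).toIntLinearEquiv⟩

end UnitsOfField

/-- The Schur multiplier of `A₅` is `ℤ/2ℤ`.  For a finite group the Schur
multiplier `H₂(G, ℤ)` can equivalently be computed as the second group
cohomology `H²(G, ℂˣ)` with trivial coefficients, which is what we state: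
`H²(A₅, ℂˣ) ≅ ℤ/2ℤ`. -/
theorem schur_multiplier_A5 :
    Nonempty ((groupCohomology
        (Rep.trivial ℤ (alternatingGroup (Fin 5)) (Additive ℂˣ)) 2) ≃ₗ[ℤ] ZMod 2) :=
  Nonempty.map2 .trans schur_multiplier_A5_general (nonempty_torsionBy_two_units_equiv ℂ)
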